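/- arXiv:2007.08829 — 2 statements merged into one kernel-verified Lean document; each statement's English description precedes it below -/
import Mathlib

section
/- Let g ∈ G. Then g belongs to G_ES (i.e., g ∈ G_VaR and the function h_g(p) = (1−p)g(p), with the convention 0·∞ = 0 so that h_g(1) = 0, is concave on (0,1) and left-continuous at 1) if and only if there exists a random variable Z ∈ L^1 such that g(p) = ES_p(Z) for every p ∈ [0,1]. -/
open MeasureTheory Set Filter

variable {Ω : Type*} [MeasurableSpace Ω]

/-- An atomless probability space: every set of positive measure has a subset of
strictly smaller positive measure. -/
def Atomless (μ : Measure Ω) : Prop :=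
  ∀ A : Set Ω, MeasurableSet A → 0 < μ A →
    ∃ B : Set Ω, MeasurableSet B ∧ B ⊆ A ∧ 0 < μ B ∧ μ B < μ A

/-- Value at Risk at level `p`: the left `p`-quantile for `p ∈ (0,1]`, the essential
infimum for `p = 0`.  Values are extended reals. -/
noncomputable def VaR (μ : Measure Ω) (X : Ω → ℝ) (p : ℝ) : EReal :=
  if p = 0 then essInf (fun ω => (X ω : EReal)) μ
  else sInf ((fun x : ℝ => (x : EReal)) '' {x : ℝ | ENNReal.ofReal p ≤ μ {ω | X ω ≤ x}})

/-- Real-valued version of the left `p`-quantile, used as the integrand of ES. -/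
noncomputable def VaRr (μ : Measure Ω) (X : Ω → ℝ) (p : ℝ) : ℝ :=
  sInf {x : ℝ | ENNReal.ofReal p ≤ μ {ω | X ω ≤ x}}

/-- Expected Shortfall at level `p`: `(1/(1-p)) ∫_p^1 VaR_q(X) dq` for `p ∈ [0,1)`,
the essential supremum for `p = 1`. -/
noncomputable def ES (μ : Measure Ω) (X : Ω → ℝ) (p : ℝ) : EReal :=
  if p = 1 then essSup (fun ω => (X ω : EReal)) μ
  else (((1 - p)⁻¹ * ∫ q in Set.Ioo p 1, VaRr μ X q : ℝ) : EReal)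

/-- The `g`-adjusted Expected Shortfall, `sup_{p ∈ [0,1]} (ES_p(X) - g(p))`.
Note that in `EReal` one has `⊤ - ⊤ = ⊥`, matching the convention `∞ - ∞ = -∞`. -/
noncomputable def adjES (μ : Measure Ω) (g : ℝ → EReal) (X : Ω → ℝ) : EReal :=
  ⨆ p ∈ Set.Icc (0:ℝ) 1, (ES μ X p - g p)

/-- The class `𝒢` of risk profiles: increasing functions `[0,1] → (-∞,∞]` that are
not identically `∞`. -/
def IsRiskProfile (g : ℝ → EReal) : Prop :=
  MonotoneOn g (Set.Icc (0:ℝ) 1) ∧ (∀ p ∈ Set.Icc (0:ℝ) 1, g p ≠ ⊥) ∧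
    ∃ p ∈ Set.Icc (0:ℝ) 1, g p ≠ ⊤

/-- Second-order stochastic dominance: `SSD μ X Y` means `X ≥_SSD Y`, i.e. every
risk-averse agent prefers `X` to `Y` (positive values are losses). -/
def SSD (μ : Measure Ω) (X Y : Ω → ℝ) : Prop :=
  ∀ u : ℝ → ℝ, Monotone u → ConcaveOn ℝ Set.univ u →
    ∫ ω, u (-(Y ω)) ∂μ ≤ ∫ ω, u (-(X ω)) ∂μ

/-- The inf-convolution of the functionals `ρ_1, …, ρ_n`. -/
noncomputable def infConv (μ : Measure Ω) {n : ℕ} (ρ : Fin n → ((Ω → ℝ) → EReal))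
    (X : Ω → ℝ) : EReal :=
  ⨅ (Y : Fin n → Ω → ℝ) (_ : (∀ i, Integrable (Y i) μ) ∧ ∀ ω, (∑ i, Y i ω) = X ω),
    ∑ i, ρ i (Y i)

/-- The class `𝒢_VaR`: risk profiles finite on `[0,1)`, left-continuous on `[0,1]`
and right-continuous at `0`. -/
def GVaRProfile (g : ℝ → EReal) : Prop :=
  IsRiskProfile g ∧ (∀ p ∈ Set.Ico (0:ℝ) 1, g p ≠ ⊤) ∧
    (∀ p ∈ Set.Ioc (0:ℝ) 1, Filter.Tendsto g (nhdsWithin p (Set.Ico 0 p)) (nhds (g p))) ∧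
    Filter.Tendsto g (nhdsWithin 0 (Set.Ioc 0 1)) (nhds (g 0))

/-- The class `𝒢_ES`: profiles in `𝒢_VaR` such that `h_g(p) = (1-p)g(p)` is concave
on `(0,1)` and left-continuous at `1` (with `h_g(1) = 0` by the convention `0·∞ = 0`). -/
def GESProfile (g : ℝ → EReal) : Prop :=
  GVaRProfile g ∧ ConcaveOn ℝ (Set.Ioo (0:ℝ) 1) (fun p => (1 - p) * (g p).toReal) ∧
    Filter.Tendsto (fun p => (1 - p) * (g p).toReal) (nhdsWithin 1 (Set.Ico (0:ℝ) 1)) (nhds 0)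

/-!
Put `h(p) = (1 - p) g(p)`. Both conditions say that `h(p) = ∫_p^1 v` on `[0,1]` for some monotone
integrable `v`: a concave function that is continuous on `[0,1]` and vanishes at `1` is the integral
of minus its right derivative, while `(1 - p) ES_p(Z)` is the integral of the quantile function of
`Z`. Conversely, a monotone `v` on `(0,1)` is almost everywhere the quantile function of `v ∘ U`,
where `U` is uniform on `(0,1)`. At `p = 1` the integrals say nothing about `g`, but there both
sides are left limits: the averages of a monotone function over `(p,1)` tend to its essential
supremum.

The uniform `U` comes from a maximal chain of measurable sets for inclusion up to null sets: the set
of measures of its members is closed under suprema and infima, and a gap in it would contradict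
atomlessness together with maximality. A countable subchain with rational measures then provides the
sublevel sets of `U`.
-/

/-- Maximal chains of measurable sets for inclusion up to null sets. In an atomless space such a
chain contains a set of every measure, and plays the role of the sublevel sets of a uniform random
variable. -/
def IsMaxAEChain (μ : Measure Ω) (C : Set {s : Set Ω // MeasurableSet s}) : Prop :=
  IsMaxChain (fun s t => s.1 ≤ᵐ[μ] t.1) C

section AEDirected

variable {μ : Measure Ω} {ι : Type*} [Countable ι] {s : ι → Set Ω}

lemma measure_iUnion_sdiff_ae_le_eq_zero (μ : Measure Ω) (s : ι → Set Ω) :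
    μ (⋃ p : {p : ι × ι // s p.1 ≤ᵐ[μ] s p.2}, s p.1.1 \ s p.1.2) = 0 :=
  measure_iUnion_null fun p => ae_le_set.1 p.2

lemma measure_iUnion_eq_iSup_of_ae_directed (hs : Directed (· ≤ᵐ[μ] ·) s) :
    μ (⋃ i, s i) = ⨆ i, μ (s i) := by
  set N := ⋃ p : {p : ι × ι // s p.1 ≤ᵐ[μ] s p.2}, s p.1.1 \ s p.1.2
  have hN : μ N = 0 := measure_iUnion_sdiff_ae_le_eq_zero μ s
  have hsub : ∀ i j, s i ≤ᵐ[μ] s j → s i \ N ⊆ s j \ N := fun i j hij ω ⟨hωi, hωN⟩ =>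
    ⟨by_contra fun hωj => hωN (mem_iUnion.2 ⟨⟨(i, j), hij⟩, hωi, hωj⟩), hωN⟩
  have hdir : Directed (· ⊆ ·) fun i => s i \ N := fun i j =>
    (hs i j).imp fun k ⟨hik, hjk⟩ => ⟨hsub i k hik, hsub j k hjk⟩
  calc μ (⋃ i, s i) = μ (⋃ i, s i \ N) := by rw [← iUnion_sdiff, measure_sdiff_null hN]
    _ = ⨆ i, μ (s i) := by simp_rw [hdir.measure_iUnion, measure_sdiff_null hN]

lemma measure_iInter_eq_iInf_of_ae_directed [IsFiniteMeasure μ] [Nonempty ι]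
    (hm : ∀ i, MeasurableSet (s i)) (hs : Directed (fun t u => u ≤ᵐ[μ] t) s) :
    μ (⋂ i, s i) = ⨅ i, μ (s i) := by
  set N := ⋃ p : {p : ι × ι // s p.1 ≤ᵐ[μ] s p.2}, s p.1.1 \ s p.1.2
  have hN : μ N = 0 := measure_iUnion_sdiff_ae_le_eq_zero μ s
  have hsub : ∀ i j, s i ≤ᵐ[μ] s j → s i ∪ N ⊆ s j ∪ N := fun i j hij =>
    union_subset (fun ω hωi => (em (ω ∈ s j)).imp id fun hωj =>
      mem_iUnion.2 ⟨⟨(i, j), hij⟩, hωi, hωj⟩) subset_union_right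
  have hdir : Directed (· ⊇ ·) fun i => s i ∪ N := fun i j =>
    (hs i j).imp fun k ⟨hik, hjk⟩ => ⟨hsub k i hik, hsub k j hjk⟩
  have hNm : MeasurableSet N := .iUnion fun p => (hm _).diff (hm _)
  have hunion : ∀ t : Set Ω, μ (t ∪ N) = μ t := fun t =>
    measure_congr (union_ae_eq_left_of_ae_eq_empty (ae_eq_empty.2 hN))
  calc μ (⋂ i, s i) = μ (⋂ i, s i ∪ N) := by rw [← iInter_union, hunion]
    _ = ⨅ i, μ (s i) := by
        rw [hdir.measure_iInter (fun i => ((hm i).union hNm).nullMeasurableSet)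
          ⟨Classical.arbitrary ι, measure_ne_top μ _⟩]
        simp_rw [hunion]

end AEDirected

namespace IsMaxAEChain

variable {μ : Measure Ω} {C : Set {s : Set Ω // MeasurableSet s}}
  {s t : {s : Set Ω // MeasurableSet s}}

lemma total (hC : IsMaxAEChain μ C) (hs : s ∈ C) (ht : t ∈ C) :
    s.1 ≤ᵐ[μ] t.1 ∨ t.1 ≤ᵐ[μ] s.1 := by
  rcases eq_or_ne s t with rfl | hne
  · exact .inl (EventuallyLE.refl _ _)
  · exact hC.1 hs ht hne

lemma mem_of_total (hC : IsMaxAEChain μ C) (h : ∀ t ∈ C, s.1 ≤ᵐ[μ] t.1 ∨ t.1 ≤ᵐ[μ] s.1) :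
    s ∈ C := by
  rw [hC.2 (hC.1.insert fun t ht _ => h t ht) (subset_insert s C)]
  exact mem_insert s C

lemma empty_mem (hC : IsMaxAEChain μ C) : ⟨∅, .empty⟩ ∈ C :=
  hC.mem_of_total fun t _ => .inl (empty_subset t.1).eventuallyLE

lemma univ_mem (hC : IsMaxAEChain μ C) : ⟨univ, .univ⟩ ∈ C :=
  hC.mem_of_total fun t _ => .inr (subset_univ t.1).eventuallyLE

lemma ae_le_of_measure_le [IsFiniteMeasure μ] (hC : IsMaxAEChain μ C) (hs : s ∈ C) (ht : t ∈ C)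
    (hst : μ s.1 ≤ μ t.1) : s.1 ≤ᵐ[μ] t.1 := by
  refine (hC.total hs ht).elim id fun hts => ?_
  exact (ae_eq_of_ae_subset_of_measure_ge hts hst t.2.nullMeasurableSet
    (measure_ne_top μ _)).symm.le

lemma iUnion_mem {ι : Type*} [Countable ι] (hC : IsMaxAEChain μ C)
    {s : ι → {s : Set Ω // MeasurableSet s}} (hs : ∀ i, s i ∈ C) :
    ⟨⋃ i, (s i).1, .iUnion fun i => (s i).2⟩ ∈ C := by
  refine hC.mem_of_total fun t ht => ?_
  by_cases h : ∃ i, t.1 ≤ᵐ[μ] (s i).1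
  · obtain ⟨i, hi⟩ := h
    exact .inr (hi.trans (subset_iUnion (fun i => (s i).1) i).eventuallyLE)
  · push Not at h
    exact .inl ((Filter.EventuallyLE.countable_iUnion fun i =>
      (hC.total (hs i) ht).resolve_right (h i)).trans
        (iUnion_subset fun _ => subset_rfl).eventuallyLE)

lemma iInter_mem {ι : Type*} [Countable ι] (hC : IsMaxAEChain μ C)
    {s : ι → {s : Set Ω // MeasurableSet s}} (hs : ∀ i, s i ∈ C) :
    ⟨⋂ i, (s i).1, .iInter fun i => (s i).2⟩ ∈ C := by
  refine hC.mem_of_total fun t ht => ?_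
  by_cases h : ∃ i, (s i).1 ≤ᵐ[μ] t.1
  · obtain ⟨i, hi⟩ := h
    exact .inl ((iInter_subset (fun i => (s i).1) i).eventuallyLE.trans hi)
  · push Not at h
    exact .inr ((subset_iInter fun _ => subset_rfl).eventuallyLE.trans
      (Filter.EventuallyLE.countable_iInter fun i => (hC.total (hs i) ht).resolve_left (h i)))

lemma sSup_mem_image_measure [IsFiniteMeasure μ] (hC : IsMaxAEChain μ C) {V : Set ENNReal}
    (hV : V ⊆ (fun s => μ s.1) '' C) (hne : V.Nonempty) : sSup V ∈ (fun s => μ s.1) '' C := by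
  obtain ⟨u, hu, hlim, huV⟩ := exists_seq_tendsto_sSup hne (OrderTop.bddAbove V)
  choose s hs hsu using fun n => hV (huV n)
  have hmono : Directed (· ≤ᵐ[μ] ·) fun n => (s n).1 :=
    directed_of_isDirected_le fun m n hmn =>
      hC.ae_le_of_measure_le (hs m) (hs n) (by simpa only [hsu] using hu hmn)
  refine ⟨_, hC.iUnion_mem hs, ?_⟩
  simp only [measure_iUnion_eq_iSup_of_ae_directed hmono, hsu]
  exact tendsto_nhds_unique (tendsto_atTop_iSup hu) hlim

lemma sInf_mem_image_measure [IsFiniteMeasure μ] (hC : IsMaxAEChain μ C) {V : Set ENNReal}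
    (hV : V ⊆ (fun s => μ s.1) '' C) (hne : V.Nonempty) : sInf V ∈ (fun s => μ s.1) '' C := by
  obtain ⟨u, hu, hlim, huV⟩ := exists_seq_tendsto_sInf hne (OrderBot.bddBelow V)
  choose s hs hsu using fun n => hV (huV n)
  have hanti : Directed (fun t u => u ≤ᵐ[μ] t) fun n => (s n).1 :=
    directed_of_isDirected_le fun m n hmn =>
      hC.ae_le_of_measure_le (hs n) (hs m) (by simpa only [hsu] using hu hmn)
  refine ⟨_, hC.iInter_mem hs, ?_⟩
  simp only [measure_iInter_eq_iInf_of_ae_directed (fun n => (s n).2) hanti, hsu]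
  exact tendsto_nhds_unique (tendsto_atTop_iInf hu) hlim

lemma exists_measure_between [IsFiniteMeasure μ] (hC : IsMaxAEChain μ C) (hμ : Atomless μ)
    (hs : s ∈ C) (ht : t ∈ C) (hst : μ s.1 < μ t.1) : ∃ e ∈ C, μ s.1 < μ e.1 ∧ μ e.1 < μ t.1 := by
  by_contra! hgap
  have hdiff : 0 < μ (t.1 \ s.1) := (tsub_pos_of_lt hst).trans_le le_measure_sdiff
  obtain ⟨f, hf, hft, hf0, hflt⟩ := hμ _ (t.2.diff s.2) hdiff
  have hdisj : Disjoint s.1 f := disjoint_sdiff_right.mono_right hft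
  have hsub : s.1 ≤ᵐ[μ] t.1 := hC.ae_le_of_measure_le hs ht hst.le
  let e : {s : Set Ω // MeasurableSet s} := ⟨s.1 ∪ f, s.2.union hf⟩
  have hμe : μ e.1 = μ s.1 + μ f := measure_union hdisj hf
  have hse : μ s.1 < μ e.1 := by
    rw [hμe]
    exact ENNReal.lt_add_right (measure_ne_top μ _) hf0.ne'
  have het : μ e.1 < μ t.1 := by
    calc μ e.1 = μ s.1 + μ f := hμe
      _ < μ s.1 + μ (t.1 \ s.1) := ENNReal.add_lt_add_left (measure_ne_top μ _) hflt
      _ = μ t.1 := by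
        rw [measure_add_sdiff s.2.nullMeasurableSet,
          measure_congr (union_ae_eq_right_iff_ae_subset.2 hsub)]
  have het' : e.1 ≤ᵐ[μ] t.1 :=
    (hsub.union (hft.trans sdiff_subset).eventuallyLE).trans (union_self t.1).subset.eventuallyLE
  have he : e ∈ C := hC.mem_of_total fun d hd => by
    rcases le_or_gt (μ d.1) (μ s.1) with hds | hsd
    · exact .inr ((hC.ae_le_of_measure_le hd hs hds).trans subset_union_left.eventuallyLE)
    · exact .inl (het'.trans (hC.ae_le_of_measure_le ht hd (hgap d hd hsd)))
  exact (hgap e he hse).not_gt het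

lemma exists_measure_eq [IsFiniteMeasure μ] (hC : IsMaxAEChain μ C) (hμ : Atomless μ)
    {x : ENNReal} (hx : x ≤ μ univ) : ∃ s ∈ C, μ s.1 = x := by
  obtain ⟨a, ha, haV⟩ := hC.sSup_mem_image_measure (V := (fun s => μ s.1) '' C ∩ Iic x)
    inter_subset_left ⟨0, ⟨_, hC.empty_mem, measure_empty⟩, zero_le (a := x)⟩
  obtain ⟨b, hb, hbV⟩ := hC.sInf_mem_image_measure (V := (fun s => μ s.1) '' C ∩ Ici x)
    inter_subset_left ⟨μ univ, ⟨_, hC.univ_mem, rfl⟩, hx⟩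
  have hax : μ a.1 ≤ x := haV.trans_le (sSup_le fun y hy => hy.2)
  have hxb : x ≤ μ b.1 := (le_sInf fun y hy => hy.2).trans_eq hbV.symm
  rcases (hax.trans hxb).eq_or_lt with hab | hab
  · exact ⟨a, ha, hax.antisymm (hxb.trans_eq hab.symm)⟩
  · obtain ⟨e, he, hae, heb⟩ := hC.exists_measure_between hμ ha hb hab
    rcases le_total (μ e.1) x with hex | hxe
    · exact ((haV.symm.trans_lt hae).not_ge (le_sSup ⟨mem_image_of_mem _ he, hex⟩)).elim
    · exact ((heb.trans_eq hbV).not_ge (sInf_le ⟨mem_image_of_mem _ he, hxe⟩)).elim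

end IsMaxAEChain

section Uniform

open ProbabilityTheory

variable {μ : Measure Ω} [IsFiniteMeasure μ]

lemma exists_chain_measure_eq_ofReal (hμ : Atomless μ) :
    ∃ A : ℚ → Set Ω, (∀ q, MeasurableSet (A q)) ∧ (∀ q r, q ≤ r → A q ≤ᵐ[μ] A r) ∧
      (∀ q : ℚ, μ (A q) = min (ENNReal.ofReal q) (μ univ)) ∧ ∃ q > 0, A q = univ := by
  have hC : IsMaxAEChain μ _ := maxChain_spec
  have hval : ∀ q : ℚ, ∃ s ∈ maxChain fun s t : {s : Set Ω // MeasurableSet s} => s.1 ≤ᵐ[μ] t.1,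
      μ s.1 = min (ENNReal.ofReal q) (μ univ) ∧ (μ univ ≤ ENNReal.ofReal q → s.1 = univ) := by
    intro q
    rcases le_or_gt (μ univ) (ENNReal.ofReal q) with hq | hq
    · exact ⟨_, hC.univ_mem, (min_eq_right hq).symm, fun _ => rfl⟩
    · obtain ⟨s, hs, hμs⟩ := hC.exists_measure_eq hμ (min_le_right (ENNReal.ofReal q) (μ univ))
      exact ⟨s, hs, hμs, fun h => absurd h hq.not_ge⟩
  choose A hAC hA hA_univ using hval
  refine ⟨fun q => (A q).1, fun q => (A q).2, fun q r hqr => ?_, hA, ?_⟩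
  · refine hC.ae_le_of_measure_le (hAC q) (hAC r) ?_
    rw [hA, hA]
    gcongr
  · obtain ⟨q, hq⟩ := exists_rat_gt (μ.real univ)
    have hq0 : 0 < (q : ℝ) := measureReal_nonneg.trans_lt hq
    exact ⟨q, by exact_mod_cast hq0, hA_univ q
      ((ENNReal.le_ofReal_iff_toReal_le (measure_ne_top μ univ) hq0.le).2 hq.le)⟩

lemma iSup_ofReal_rat_lt (x : ℝ) :
    ⨆ q : {q : ℚ // 0 < q ∧ (q : ℝ) < x}, ENNReal.ofReal q = ENNReal.ofReal x := by
  refine le_antisymm (iSup_le fun q => ENNReal.ofReal_le_ofReal q.2.2.le) ?_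
  refine le_of_forall_lt fun c hc => ?_
  obtain ⟨q, -, hcq, hqx⟩ := ENNReal.lt_iff_exists_rat_btwn.1 hc
  have hq : 0 < q := by
    exact_mod_cast Real.toNNReal_pos.1 (ENNReal.coe_pos.1 (zero_le.trans_lt hcq))
  exact hcq.trans_le (le_iSup (fun q : {q : ℚ // 0 < q ∧ (q : ℝ) < x} => ENNReal.ofReal q)
    ⟨q, hq, (ENNReal.ofReal_lt_ofReal_iff_of_nonneg (by positivity)).1 hqx⟩)

lemma exists_measurable_measure_preimage_Iio_eq (hμ : Atomless μ) :
    ∃ U : Ω → ℝ, Measurable U ∧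
      ∀ x, μ (U ⁻¹' Iio x) = min (ENNReal.ofReal x) (μ univ) := by
  obtain ⟨A, hAm, hA_mono, hμA, q₁, hq₁, hAq₁⟩ := exists_chain_measure_eq_ofReal hμ
  let U : Ω → ℝ := fun ω => sInf ((↑) '' {q : ℚ | 0 < q ∧ ω ∈ A q})
  have hU_lt : ∀ x, U ⁻¹' Iio x = ⋃ q : {q : ℚ // 0 < q ∧ (q : ℝ) < x}, A q := by
    intro x
    ext ω
    have hne : ((↑) '' {q : ℚ | 0 < q ∧ ω ∈ A q} : Set ℝ).Nonempty :=
      ⟨q₁, q₁, ⟨hq₁, hAq₁ ▸ mem_univ ω⟩, rfl⟩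
    have hbdd : BddBelow ((↑) '' {q : ℚ | 0 < q ∧ ω ∈ A q} : Set ℝ) := by
      refine ⟨0, ?_⟩
      rintro _ ⟨q, ⟨hq, -⟩, rfl⟩
      exact_mod_cast hq.le
    simp only [U, mem_preimage, mem_Iio, csInf_lt_iff hbdd hne, exists_mem_image,
      mem_iUnion, Subtype.exists, exists_prop]
    grind
  refine ⟨U, measurable_of_Iio fun x => ?_, fun x => ?_⟩
  · rw [hU_lt]
    exact .iUnion fun q => hAm q
  · have hdir : Directed (· ≤ᵐ[μ] ·) fun q : {q : ℚ // 0 < q ∧ (q : ℝ) < x} => A q :=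
      directed_of_isDirected_le fun q r hqr => hA_mono q r hqr
    rw [hU_lt, measure_iUnion_eq_iSup_of_ae_directed hdir]
    simp_rw [hμA, ← iSup_ofReal_rat_lt x]
    exact (iSup_inf_eq _ _).symm

lemma exists_hasLaw_uniform (hμ : Atomless μ) :
    ∃ U : Ω → ℝ, HasLaw U (volume.restrict (Ioo 0 (μ.real univ))) μ := by
  obtain ⟨U, hU, hμU⟩ := exists_measurable_measure_preimage_Iio_eq hμ
  refine ⟨U, hU.aemeasurable, ?_⟩
  have huniv : μ.map U univ = volume.restrict (Ioo 0 (μ.real univ)) univ := by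
    simp [Measure.map_apply hU .univ]
  refine ext_of_generate_finite _ (borel_eq_generateFrom_Iio ℝ) isPiSystem_Iio ?_ huniv
  rintro _ ⟨x, rfl⟩
  calc μ.map U (Iio x) = min (ENNReal.ofReal x) (μ univ) := by
        rw [Measure.map_apply hU measurableSet_Iio, hμU]
    _ = volume.restrict (Ioo 0 (μ.real univ)) (Iio x) := by
        rw [Measure.restrict_apply measurableSet_Iio, inter_comm, Ioo_inter_Iio, Real.volume_Ioo,
          sub_zero, min_comm, ENNReal.ofReal_min, ofReal_measureReal]

lemma exists_identDistrib_of_atomless {β : Type*} [MeasurableSpace β] (hμ : Atomless μ) {q : ℝ → β}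
    (hq : AEMeasurable q (volume.restrict (Ioo 0 (μ.real univ)))) :
    ∃ X : Ω → β, IdentDistrib X q μ (volume.restrict (Ioo 0 (μ.real univ))) := by
  obtain ⟨U, hU⟩ := exists_hasLaw_uniform hμ
  exact ⟨q ∘ U, (hU.identDistrib .id).comp_of_aemeasurable (hU.map_eq ▸ hq)⟩

end Uniform

section ConvexPrimitive

variable {a b : ℝ}

lemma integrableOn_deriv_right_of_le {f f' : ℝ → ℝ} {m : ℝ} (hcont : ContinuousOn f (Icc a b))
    (hderiv : ∀ x ∈ Ioo a b, HasDerivWithinAt f (f' x) (Ioi x) x) (hm : ∀ x ∈ Ioo a b, m ≤ f' x) :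
    IntegrableOn f' (Ioc a b) := by
  have hsub : IntegrableOn (fun x => f' x - m) (Ioc a b) :=
    intervalIntegral.integrableOn_deriv_right_of_nonneg (g := fun x => f x - x * m)
      (hcont.sub (by fun_prop))
      (fun x hx => (hderiv x hx).sub ((hasDerivAt_mul_const m).hasDerivWithinAt))
      fun x hx => sub_nonneg.2 (hm x hx)
  exact (hsub.add (integrableOn_const (C := m) measure_Ioc_lt_top.ne)).congr_fun
    (fun x _ => sub_add_cancel (f' x) m) measurableSet_Ioc

lemma integrableOn_deriv_right_of_monotoneOn {f f' : ℝ → ℝ} (hcont : ContinuousOn f (Icc a b))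
    (hderiv : ∀ x ∈ Ioo a b, HasDerivWithinAt f (f' x) (Ioi x) x)
    (hmono : MonotoneOn f' (Ioo a b)) :
    IntegrableOn f' (Ioc a b) := by
  rcases le_or_gt b a with hba | hab
  · simp [Ioc_eq_empty hba.not_gt]
  obtain ⟨c, hac, hcb⟩ := exists_between hab
  have hright : IntegrableOn f' (Ioc c b) :=
    integrableOn_deriv_right_of_le (hcont.mono (Icc_subset_Icc_left hac.le))
      (fun x hx => hderiv x (Ioo_subset_Ioo_left hac.le hx))
      fun x hx => hmono ⟨hac, hcb⟩ (Ioo_subset_Ioo_left hac.le hx) hx.1.le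
  have hleft : IntegrableOn f' (Ioc a c) := integrable_neg_iff.1 <|
    integrableOn_deriv_right_of_le (hcont.neg.mono (Icc_subset_Icc_right hcb.le))
      (fun x hx => (hderiv x (Ioo_subset_Ioo_right hcb.le hx)).neg)
      fun x hx => neg_le_neg (hmono (Ioo_subset_Ioo_right hcb.le hx) ⟨hac, hcb⟩ hx.2.le)
  rw [← Ioc_union_Ioc_eq_Ioc hac.le hcb.le]
  exact hleft.union hright

lemma exists_monotoneOn_integral_eq_sub_of_convexOn {f : ℝ → ℝ} (hconv : ConvexOn ℝ (Ioo a b) f)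
    (hcont : ContinuousOn f (Icc a b)) :
    ∃ v : ℝ → ℝ, MonotoneOn v (Ioo a b) ∧ IntegrableOn v (Ioo a b) ∧
      ∀ x ∈ Icc a b, ∀ y ∈ Icc a b, x ≤ y → ∫ t in x..y, v t = f y - f x := by
  have hmono : MonotoneOn (fun x => derivWithin f (Ioi x) x) (Ioo a b) := by
    simpa only [interior_Ioo] using hconv.monotoneOn_rightDeriv
  have hderiv : ∀ x ∈ Ioo a b, HasDerivWithinAt f (derivWithin f (Ioi x) x) (Ioi x) x :=
    fun x hx => hconv.hasDerivWithinAt_rightDeriv_of_mem_interior (by rwa [interior_Ioo])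
  have hint := integrableOn_deriv_right_of_monotoneOn hcont hderiv hmono
  refine ⟨_, hmono, hint.mono_set Ioo_subset_Ioc_self, fun x hx y hy hxy => ?_⟩
  refine intervalIntegral.integral_eq_sub_of_hasDeriv_right_of_le hxy
    (hcont.mono (Icc_subset_Icc hx.1 hy.2)) (fun z hz => hderiv z (Ioo_subset_Ioo hx.1 hy.2 hz)) ?_
  exact (intervalIntegrable_iff_integrableOn_Ioc_of_le hxy).2
    (hint.mono_set (Ioc_subset_Ioc hx.1 hy.2))

lemma concaveOn_integral_of_monotoneOn {v : ℝ → ℝ} (hmono : MonotoneOn v (Ioo a b))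
    (hint : IntegrableOn v (Ioo a b)) : ConcaveOn ℝ (Icc a b) fun x => ∫ t in x..b, v t := by
  have hii : ∀ x ∈ Icc a b, ∀ y ∈ Icc a b, IntervalIntegrable v volume x y := fun x hx y hy =>
    (((integrableOn_Icc_iff_integrableOn_Ioo).2 hint).mono_set
      (uIcc_subset_Icc hx hy)).intervalIntegrable
  refine concaveOn_of_slope_anti_adjacent (convex_Icc a b) fun {x y z} hx hz hxy hyz => ?_
  have hy : y ∈ Ioo a b := ⟨hx.1.trans_lt hxy, hyz.trans_le hz.2⟩
  have hy' := Ioo_subset_Icc_self hy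
  have hb : b ∈ Icc a b := ⟨hy'.1.trans hy'.2, le_rfl⟩
  have hxy_add := intervalIntegral.integral_add_adjacent_intervals (hii x hx y hy') (hii y hy' b hb)
  have hyz_add := intervalIntegral.integral_add_adjacent_intervals (hii y hy' z hz) (hii z hz b hb)
  have hxy_le : ∫ t in x..y, v t ≤ (y - x) * v y := by
    simpa using intervalIntegral.integral_mono_on_of_le_Ioo hxy.le (hii x hx y hy')
      (intervalIntegrable_const (c := v y)) fun t ht =>
        hmono ⟨hx.1.trans_lt ht.1, ht.2.trans hy.2⟩ hy ht.2.le
  have hyz_ge : (z - y) * v y ≤ ∫ t in y..z, v t := by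
    simpa using intervalIntegral.integral_mono_on_of_le_Ioo hyz.le
      (intervalIntegrable_const (c := v y)) (hii y hy' z hz) fun t ht =>
        hmono hy ⟨hy.1.trans ht.1, ht.2.trans_le hz.2⟩ ht.1.le
  calc ((∫ t in z..b, v t) - ∫ t in y..b, v t) / (z - y) ≤ -v y := by
        rw [div_le_iff₀ (sub_pos.2 hyz)]
        linarith
    _ ≤ ((∫ t in y..b, v t) - ∫ t in x..b, v t) / (y - x) := by
        rw [le_div_iff₀ (sub_pos.2 hxy)]
        linarith

end ConvexPrimitive

section Quantile

open ProbabilityTheory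

lemma csInf_setOf_le_stieltjesFunction_le_iff {F : StieltjesFunction ℝ} {t x : ℝ}
    (hne : {y | t ≤ F y}.Nonempty) (hbdd : BddBelow {y | t ≤ F y}) :
    sInf {y | t ≤ F y} ≤ x ↔ t ≤ F x := by
  refine ⟨fun h => ?_, fun h => csInf_le hbdd h⟩
  have hgt : ∀ y > x, t ≤ F y := fun y hxy =>
    let ⟨_, hz, hzy⟩ := exists_lt_of_csInf_lt hne (h.trans_lt hxy)
    le_trans hz (F.mono hzy.le)
  exact ge_of_tendsto ((F.right_continuous x).mono Ioi_subset_Ici_self)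
    (eventually_nhdsWithin_of_forall hgt)

lemma inter_preimage_Iio_subset_or_subset {α β : Type*} [LinearOrder α] [LinearOrder β] {s : Set α}
    {f g : α → β} (hf : MonotoneOn f s) (hg : MonotoneOn g s) (r : β) :
    s ∩ f ⁻¹' Iio r ⊆ g ⁻¹' Iio r ∨ s ∩ g ⁻¹' Iio r ⊆ f ⁻¹' Iio r := by
  by_contra! h
  obtain ⟨x, ⟨hxs, hfx⟩, hgx⟩ := not_subset.1 h.1
  obtain ⟨y, ⟨hys, hgy⟩, hfy⟩ := not_subset.1 h.2
  exact lt_asymm (hf.reflect_lt hxs hys (lt_of_lt_of_le hfx (not_lt.1 hfy)))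
    (hg.reflect_lt hys hxs (lt_of_lt_of_le hgy (not_lt.1 hgx)))

lemma ae_eq_of_monotoneOn_of_identDistrib {α : Type*} [LinearOrder α] [MeasurableSpace α]
    {ν : Measure α} {s : Set α} [IsFiniteMeasure (ν.restrict s)] (hs : MeasurableSet s)
    {f g : α → ℝ} (hf : MonotoneOn f s) (hg : MonotoneOn g s)
    (h : IdentDistrib f g (ν.restrict s) (ν.restrict s)) : f =ᵐ[ν.restrict s] g := by
  have hsub : ∀ u v : Set α, s ∩ u ⊆ v → u ≤ᵐ[ν.restrict s] v := fun u v huv =>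
    (ae_restrict_mem hs).mono fun x hx hxu => huv ⟨hx, hxu⟩
  have hIio : ∀ r, f ⁻¹' Iio r =ᵐ[ν.restrict s] g ⁻¹' Iio r := by
    intro r
    have hνr := h.measure_mem_eq (measurableSet_Iio (a := r))
    rcases inter_preimage_Iio_subset_or_subset hf hg r with hfg | hgf
    · exact ae_eq_of_ae_subset_of_measure_ge (hsub _ _ hfg) hνr.ge
        (h.aemeasurable_fst.nullMeasurableSet_preimage measurableSet_Iio) (measure_ne_top _ _)
    · exact (ae_eq_of_ae_subset_of_measure_ge (hsub _ _ hgf) hνr.le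
        (h.aemeasurable_snd.nullMeasurableSet_preimage measurableSet_Iio) (measure_ne_top _ _)).symm
  filter_upwards [ae_all_iff.2 fun r : ℚ => (hIio r).mem_iff] with x hx
  exact eq_of_forall_lt_rat_iff_lt hx

variable {μ : Measure Ω} [IsProbabilityMeasure μ] {X : Ω → ℝ}

lemma ofReal_cdf_map (hX : AEMeasurable X μ) (x : ℝ) :
    ENNReal.ofReal (cdf (μ.map X) x) = μ {ω | X ω ≤ x} := by
  have := Measure.isProbabilityMeasure_map hX
  rw [ofReal_cdf, Measure.map_apply_of_aemeasurable hX measurableSet_Iic]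
  rfl

lemma VaRr_eq_csInf_cdf (hX : AEMeasurable X μ) (t : ℝ) :
    VaRr μ X t = sInf {x | t ≤ cdf (μ.map X) x} := by
  simp only [VaRr, ← ofReal_cdf_map hX, ENNReal.ofReal_le_ofReal_iff (cdf_nonneg _ _)]

lemma VaRr_le_iff (hX : AEMeasurable X μ) {t x : ℝ} (ht : t ∈ Ioo (0 : ℝ) 1) :
    VaRr μ X t ≤ x ↔ t ≤ cdf (μ.map X) x := by
  have hne : {y | t ≤ cdf (μ.map X) y}.Nonempty :=
    ((tendsto_cdf_atTop (μ.map X)).eventually (Ici_mem_nhds ht.2)).exists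
  have hbdd : BddBelow {y | t ≤ cdf (μ.map X) y} := by
    obtain ⟨y, hy⟩ := ((tendsto_cdf_atBot (μ.map X)).eventually (Iio_mem_nhds ht.1)).exists
    exact ⟨y, fun z hz => ((cdf (μ.map X)).mono.reflect_lt (hy.trans_le hz)).le⟩
  rw [VaRr_eq_csInf_cdf hX, csInf_setOf_le_stieltjesFunction_le_iff hne hbdd]

lemma monotoneOn_VaRr (hX : AEMeasurable X μ) : MonotoneOn (VaRr μ X) (Ioo 0 1) :=
  fun _ hs _ ht hst => (VaRr_le_iff hX hs).2 (hst.trans ((VaRr_le_iff hX ht).1 le_rfl))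

lemma identDistrib_VaRr (hX : AEMeasurable X μ) :
    IdentDistrib (VaRr μ X) X (volume.restrict (Ioo 0 1)) μ := by
  have hVaR : AEMeasurable (VaRr μ X) (volume.restrict (Ioo 0 1)) :=
    aemeasurable_restrict_of_monotoneOn measurableSet_Ioo (monotoneOn_VaRr hX)
  refine ⟨hVaR, hX, Measure.ext_of_Iic _ _ fun x => ?_⟩
  have := Measure.isProbabilityMeasure_map hX
  have hpre : VaRr μ X ⁻¹' Iic x ∩ Ioo 0 1 = Iic (cdf (μ.map X) x) ∩ Ioo 0 1 := by
    ext t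
    simp only [mem_inter_iff, mem_preimage, mem_Iic]
    exact and_congr_left fun ht => VaRr_le_iff hX ht
  calc ((volume.restrict (Ioo 0 1)).map (VaRr μ X)) (Iic x)
      = volume (Iic (cdf (μ.map X) x) ∩ Ioo 0 1) := by
        rw [Measure.map_apply_of_aemeasurable hVaR measurableSet_Iic,
          Measure.restrict_apply' measurableSet_Ioo, hpre]
    _ = volume (Iic (cdf (μ.map X) x) ∩ Ioc 0 1) := by
        exact measure_congr (ae_eq_set_inter (ae_eq_refl _) Ioo_ae_eq_Ioc)
    _ = ENNReal.ofReal (cdf (μ.map X) x) := by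
        rw [inter_comm, Ioc_inter_Iic, min_eq_right (cdf_le_one _ _), Real.volume_Ioc, sub_zero]
    _ = (μ.map X) (Iic x) := ofReal_cdf _ _

lemma integrableOn_VaRr (hX : Integrable X μ) : IntegrableOn (VaRr μ X) (Ioo 0 1) :=
  (identDistrib_VaRr hX.aemeasurable).integrable_iff.2 hX

lemma VaRr_ae_eq_of_identDistrib {q : ℝ → ℝ} (hq : MonotoneOn q (Ioo 0 1))
    (h : IdentDistrib X q μ (volume.restrict (Ioo 0 1))) :
    VaRr μ X =ᵐ[volume.restrict (Ioo 0 1)] q :=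
  ae_eq_of_monotoneOn_of_identDistrib measurableSet_Ioo (monotoneOn_VaRr h.aemeasurable_fst) hq
    ((identDistrib_VaRr h.aemeasurable_fst).trans h)

end Quantile

section MonotoneAverage

lemma coe_average_le_essSup {α : Type*} [MeasurableSpace α] {ν : Measure α} [IsFiniteMeasure ν]
    [NeZero ν] {f : α → ℝ} (hf : Integrable f ν) :
    ((⨍ x, f x ∂ν : ℝ) : EReal) ≤ essSup (fun x => (f x : EReal)) ν := by
  have hle : ν {x | ¬(f x : EReal) ≤ essSup (fun x => (f x : EReal)) ν} = 0 :=
    ae_iff.1 ae_le_essSup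
  obtain ⟨x, hx, hfx⟩ := exists_notMem_null_average_le (NeZero.ne ν) hf hle
  exact (EReal.coe_le_coe hfx).trans (not_not.1 hx)

variable {v : ℝ → ℝ} {a b : ℝ}

lemma le_setAverage_Ioo_of_monotoneOn (hmono : MonotoneOn v (Ioo a b))
    (hint : IntegrableOn v (Ioo a b)) {p : ℝ} (hp : p ∈ Ioo a b) : v p ≤ ⨍ x in Ioo p b, v x := by
  obtain ⟨x, hx, hvx⟩ := exists_le_setAverage (μ := volume) (by simp [hp.2]) measure_Ioo_lt_top.ne
    (hint.mono_set (Ioo_subset_Ioo_left hp.1.le))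
  exact (hmono hp (Ioo_subset_Ioo_left hp.1.le hx) hx.1.le).trans hvx

lemma coe_setAverage_Ioo_le_essSup (hint : IntegrableOn v (Ioo a b)) {p : ℝ} (hp : p ∈ Ico a b) :
    ((⨍ x in Ioo p b, v x : ℝ) : EReal) ≤
      essSup (fun x => (v x : EReal)) (volume.restrict (Ioo a b)) := by
  have : NeZero (volume.restrict (Ioo p b)) := ⟨by simp [hp.2]⟩
  have hsub := Ioo_subset_Ioo_left (b := b) hp.1
  exact (coe_average_le_essSup (hint.mono_set hsub)).trans
    (essSup_mono_measure' (Measure.restrict_mono_set volume hsub))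

lemma tendsto_setAverage_Ioo_essSup (hab : a < b) (hmono : MonotoneOn v (Ioo a b))
    (hint : IntegrableOn v (Ioo a b)) :
    Tendsto (fun p => ((⨍ x in Ioo p b, v x : ℝ) : EReal)) (nhdsWithin b (Iio b))
      (nhds (essSup (fun x => (v x : EReal)) (volume.restrict (Ioo a b)))) := by
  refine tendsto_order.2 ⟨fun c hc => ?_, fun c hc => ?_⟩
  · obtain ⟨q, hq, hcq⟩ : ∃ q ∈ Ioo a b, c < v q := by
      by_contra! hle
      exact hc.not_ge (essSup_le_of_ae_le c ((ae_restrict_mem measurableSet_Ioo).mono hle))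
    filter_upwards [Ioo_mem_nhdsLT hq.2] with p hp
    have hp' : p ∈ Ioo a b := ⟨hq.1.trans hp.1, hp.2⟩
    exact hcq.trans_le (EReal.coe_le_coe ((hmono hq hp' hp.1.le).trans
      (le_setAverage_Ioo_of_monotoneOn hmono hint hp')))
  · filter_upwards [Ico_mem_nhdsLT hab] with p hp
    exact (coe_setAverage_Ioo_le_essSup hint hp).trans_lt hc

end MonotoneAverage

section ExpectedShortfall

open ProbabilityTheory

variable {μ : Measure Ω} {X : Ω → ℝ}

lemma ES_eq_integral {p : ℝ} (hp : p < 1) :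
    ES μ X p = (((1 - p)⁻¹ * ∫ q in p..1, VaRr μ X q : ℝ) : EReal) := by
  rw [ES, if_neg hp.ne, intervalIntegral.integral_of_le hp.le, integral_Ioc_eq_integral_Ioo]

lemma ES_eq_setAverage {p : ℝ} (hp : p < 1) :
    ES μ X p = ((⨍ q in Ioo p 1, VaRr μ X q : ℝ) : EReal) := by
  rw [ES, if_neg hp.ne, setAverage_eq, Real.volume_real_Ioo_of_le hp.le, smul_eq_mul]

lemma ES_one_eq_essSup_VaRr [IsProbabilityMeasure μ] (hX : AEMeasurable X μ) :
    ES μ X 1 = essSup (fun q => (VaRr μ X q : EReal)) (volume.restrict (Ioo 0 1)) := by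
  rw [ES, if_pos rfl]
  exact ((identDistrib_VaRr hX).comp measurable_coe_real_ereal).essSup_eq.symm

lemma continuousOn_integral_VaRr [IsProbabilityMeasure μ] (hX : Integrable X μ) :
    ContinuousOn (fun p => ∫ q in p..1, VaRr μ X q) (Icc 0 1) := by
  have hint : IntegrableOn (VaRr μ X) (uIcc 0 1) := by
    rw [uIcc_of_le zero_le_one]
    exact (integrableOn_Icc_iff_integrableOn_Ioo).2 (integrableOn_VaRr hX)
  simpa only [uIcc_of_le zero_le_one] using
    intervalIntegral.continuousOn_primitive_interval_left hint

lemma continuousWithinAt_ES_one [IsProbabilityMeasure μ] (hX : Integrable X μ) :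
    ContinuousWithinAt (ES μ X) (Iio 1) 1 := by
  rw [ContinuousWithinAt, ES_one_eq_essSup_VaRr hX.aemeasurable]
  refine (tendsto_setAverage_Ioo_essSup zero_lt_one (monotoneOn_VaRr hX.aemeasurable)
    (integrableOn_VaRr hX)).congr' ?_
  exact eventually_nhdsWithin_of_forall fun r hr => (ES_eq_setAverage hr).symm

lemma continuousOn_ES [IsProbabilityMeasure μ] (hX : Integrable X μ) :
    ContinuousOn (ES μ X) (Icc 0 1) := by
  intro p hp
  rcases hp.2.lt_or_eq with hp1 | rfl
  · have heq : ES μ X =ᶠ[nhds p]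
        fun r => (((1 - r)⁻¹ * ∫ q in r..1, VaRr μ X q : ℝ) : EReal) := by
      filter_upwards [Iio_mem_nhds hp1] with r hr using ES_eq_integral hr
    refine ContinuousWithinAt.congr_of_eventuallyEq ?_ (heq.filter_mono nhdsWithin_le_nhds)
      heq.self_of_nhds
    exact continuous_coe_real_ereal.continuousAt.comp_continuousWithinAt
      ((ContinuousWithinAt.inv₀ (by fun_prop) (sub_pos.2 hp1).ne').mul
        (continuousOn_integral_VaRr hX p hp))
  · exact ((continuousWithinAt_ES_one hX).mono fun r hr => hr.2).insert.mono
      (Ico_insert_right (zero_le_one' ℝ)).ge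

end ExpectedShortfall

section RiskProfile

open ProbabilityTheory

/-- The function `h_g(p) = (1 - p) g(p)` of a risk profile `g`, whose concavity defines `𝒢_ES`.
Where `g 1 = ⊤`, the junk value of `toReal` is harmless: `h_g(1) = 0`, matching `0 · ∞ = 0`. -/
noncomputable def scaledProfile (g : ℝ → EReal) (p : ℝ) : ℝ :=
  (1 - p) * (g p).toReal

variable {μ : Measure Ω} {X : Ω → ℝ} {g : ℝ → EReal}

lemma scaledProfile_one : scaledProfile g 1 = 0 := by
  rw [scaledProfile, sub_self, zero_mul]

lemma scaledProfile_ES {p : ℝ} (hp : p ≤ 1) :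
    scaledProfile (ES μ X) p = ∫ q in p..1, VaRr μ X q := by
  rcases hp.lt_or_eq with hp | rfl
  · rw [scaledProfile, ES_eq_integral hp, EReal.toReal_coe, mul_inv_cancel_left₀ (sub_pos.2 hp).ne']
  · rw [scaledProfile_one, intervalIntegral.integral_same]

lemma coe_inv_mul_scaledProfile {p : ℝ} (hp : p < 1) (htop : g p ≠ ⊤) (hbot : g p ≠ ⊥) :
    (((1 - p)⁻¹ * scaledProfile g p : ℝ) : EReal) = g p := by
  rw [scaledProfile, inv_mul_cancel_left₀ (sub_pos.2 hp).ne', EReal.coe_toReal htop hbot]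

lemma GESProfile.continuousOn_scaledProfile (h : GESProfile g) :
    ContinuousOn (scaledProfile g) (Icc 0 1) := by
  obtain ⟨⟨⟨-, hbot, -⟩, hfin, -, hright⟩, hconc, hlim⟩ := h
  intro p hp
  rcases hp.1.eq_or_lt with rfl | hp0
  · have hg : ContinuousWithinAt (fun p => (g p).toReal) (Ioc 0 1) 0 :=
      (EReal.tendsto_toReal (hfin 0 ⟨le_rfl, one_pos⟩) (hbot 0 hp)).comp hright
    have hscaled : ContinuousWithinAt (scaledProfile g) (Ioc 0 1) 0 :=
      ContinuousWithinAt.mul (by fun_prop) hg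
    exact hscaled.insert.mono (Ioc_insert_left (zero_le_one' ℝ)).ge
  rcases hp.2.eq_or_lt with rfl | hp1
  · have hscaled : ContinuousWithinAt (scaledProfile g) (Ico 0 1) 1 := by
      rw [ContinuousWithinAt, scaledProfile_one]
      exact hlim
    exact hscaled.insert.mono (Ico_insert_right (zero_le_one' ℝ)).ge
  · exact ((hconc.continuousOn isOpen_Ioo).continuousAt
      (isOpen_Ioo.mem_nhds ⟨hp0, hp1⟩)).continuousWithinAt

lemma GESProfile.exists_monotoneOn_integral_eq (h : GESProfile g) :
    ∃ v : ℝ → ℝ, MonotoneOn v (Ioo 0 1) ∧ IntegrableOn v (Ioo 0 1) ∧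
      ∀ p ∈ Icc (0 : ℝ) 1, ∫ t in p..1, v t = scaledProfile g p := by
  obtain ⟨v, hmono, hint, hv⟩ := exists_monotoneOn_integral_eq_sub_of_convexOn
    (f := -scaledProfile g) h.2.1.neg h.continuousOn_scaledProfile.neg
  refine ⟨v, hmono, hint, fun p hp => ?_⟩
  rw [hv p hp 1 (right_mem_Icc.2 zero_le_one) hp.2]
  simp [scaledProfile_one]

lemma GESProfile.exists_eqOn_ES [IsProbabilityMeasure μ] (h : GESProfile g) (hμ : Atomless μ) :
    ∃ Z : Ω → ℝ, Integrable Z μ ∧ EqOn (ES μ Z) g (Icc 0 1) := by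
  obtain ⟨v, hmono, hint, hv⟩ := h.exists_monotoneOn_integral_eq
  obtain ⟨Z, hZv⟩ : ∃ Z : Ω → ℝ, IdentDistrib Z v μ (volume.restrict (Ioo 0 1)) := by
    simpa only [probReal_univ] using exists_identDistrib_of_atomless hμ (q := v)
      (by simpa only [probReal_univ] using hint.aemeasurable)
  have hZ : Integrable Z μ := hZv.integrable_iff.2 hint
  have hVaR : VaRr μ Z =ᵐ[volume.restrict (Ioc 0 1)] v :=
    (restrict_Ioo_eq_restrict_Ioc (μ := volume) (a := (0 : ℝ)) (b := 1)) ▸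
      VaRr_ae_eq_of_identDistrib hmono hZv
  obtain ⟨⟨⟨-, hbot, -⟩, hfin, hleft, -⟩, -⟩ := h
  have hIco : EqOn (ES μ Z) g (Ico 0 1) := by
    intro p hp
    have hint_eq : ∫ q in p..1, VaRr μ Z q = ∫ q in p..1, v q := by
      refine intervalIntegral.integral_congr_ae_restrict ?_
      rw [uIoc_of_le hp.2.le]
      exact ae_restrict_of_ae_restrict_of_subset (Ioc_subset_Ioc_left hp.1) hVaR
    rw [ES_eq_integral hp.2, hint_eq, hv p (Ico_subset_Icc_self hp),
      coe_inv_mul_scaledProfile hp.2 (hfin p hp) (hbot p (Ico_subset_Icc_self hp))]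
  refine ⟨Z, hZ, fun p hp => ?_⟩
  rcases hp.2.lt_or_eq with hp1 | rfl
  · exact hIco ⟨hp.1, hp1⟩
  · have := right_nhdsWithin_Ico_neBot (zero_lt_one' ℝ)
    refine tendsto_nhds_unique (((continuousOn_ES hZ) 1 hp).mono Ico_subset_Icc_self) ?_
    exact (hleft 1 ⟨one_pos, le_rfl⟩).congr' (eventually_nhdsWithin_of_forall hIco.symm)

lemma gesProfile_of_eqOn_ES [IsProbabilityMeasure μ] (hg : IsRiskProfile g) (hX : Integrable X μ)
    (h : EqOn (ES μ X) g (Icc 0 1)) : GESProfile g := by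
  have hcont : ContinuousOn g (Icc 0 1) := (continuousOn_ES hX).congr h.symm
  have hscaled : EqOn (scaledProfile g) (fun p => ∫ q in p..1, VaRr μ X q) (Icc 0 1) :=
    fun p hp => by simp only [← scaledProfile_ES hp.2, scaledProfile, h hp]
  have hscaled_cont : ContinuousOn (scaledProfile g) (Icc 0 1) :=
    (continuousOn_integral_VaRr hX).congr hscaled
  have hconc : ConcaveOn ℝ (Icc 0 1) (scaledProfile g) :=
    (concaveOn_integral_of_monotoneOn (monotoneOn_VaRr hX.aemeasurable)
      (integrableOn_VaRr hX)).congr hscaled.symm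
  have hleft : ∀ p ∈ Ioc (0 : ℝ) 1, Tendsto g (nhdsWithin p (Ico 0 p)) (nhds (g p)) := fun p hp =>
    (hcont p (Ioc_subset_Icc_self hp)).mono fun r hr => ⟨hr.1, hr.2.le.trans hp.2⟩
  have hone : Tendsto (scaledProfile g) (nhdsWithin 1 (Ico 0 1)) (nhds 0) := by
    simpa only [ContinuousWithinAt, scaledProfile_one] using
      (hscaled_cont 1 (right_mem_Icc.2 zero_le_one)).mono Ico_subset_Icc_self
  refine ⟨⟨hg, fun p hp => ?_, hleft, ?_⟩, hconc.subset Ioo_subset_Icc_self (convex_Ioo 0 1), hone⟩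
  · rw [← h (Ico_subset_Icc_self hp), ES_eq_integral hp.2]
    exact EReal.coe_ne_top _
  · exact (hcont 0 (left_mem_Icc.2 zero_le_one)).mono Ioc_subset_Icc_self

end RiskProfile

/-- A risk profile `g ∈ 𝒢` belongs to `𝒢_ES` (i.e. `g ∈ 𝒢_VaR` and
`h_g(p) = (1-p)g(p)` is concave on `(0,1)` and left-continuous at `1`, with the
convention `0·∞ = 0`) iff there is `Z ∈ L¹` with `g(p) = ES_p(Z)` for all `p ∈ [0,1]`. -/
theorem stmt14 (μ : Measure Ω) [IsProbabilityMeasure μ] (hatomless : Atomless μ)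
    (g : ℝ → EReal) (hg : IsRiskProfile g) :
    GESProfile g
      ↔ ∃ Z : Ω → ℝ, Integrable Z μ ∧ ∀ p ∈ Set.Icc (0:ℝ) 1, ES μ Z p = g p := by
  constructor
  · intro h
    exact h.exists_eqOn_ES hatomless
  · rintro ⟨Z, hZ, hZg⟩
    exact gesProfile_of_eqOn_ES hg hZ hZg
end

section
/- Fix q ∈ (0,1). There exists no random variable Z, bounded from below, such that ES_q(X) = sup_{p∈[0,1]} {ES_p(X) − VaR_p(Z)} for every X ∈ L^1; in other words, the standard Expected Shortfall ES_q is not a quantile-adjusted Expected Shortfall. -/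
open MeasureTheory Set Filter

variable {Ω : Type*} [MeasurableSpace Ω]

/-!
On the losses `t • 1_A` with `0 < μ A < 1 - q`, each `ES_p` is linear in `t ≥ 0`, with slope
`μ A / max (μ A) (1 - p)`. At any level `p ∈ (q, 1]` this slope is strictly larger than at `q`, so
for large `t` the term `ES_p - g p` exceeds `ES_q` as soon as the penalty `g p` is finite. Hence a
`g`-adjusted Expected Shortfall can equal `ES_q` only if `g = ∞` on `(q, 1]`, whereas the quantiles
of a real random variable are finite below level `1`.
-/

namespace Atomless

variable {μ : Measure Ω} [IsFiniteMeasure μ]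

lemma exists_subset_measureReal_le_half (h : Atomless μ) {A : Set Ω} (hA : MeasurableSet A)
    (hA_pos : 0 < μ.real A) :
    ∃ B ⊆ A, MeasurableSet B ∧ 0 < μ.real B ∧ μ.real B ≤ μ.real A / 2 := by
  obtain ⟨B, hB, hBA, hB_pos, hB_lt⟩ := h A hA (ENNReal.toReal_pos_iff.1 hA_pos).1
  have hB_pos : 0 < μ.real B := ENNReal.toReal_pos hB_pos.ne' (measure_ne_top μ B)
  have hB_lt : μ.real B < μ.real A := ENNReal.toReal_strict_mono (measure_ne_top μ A) hB_lt
  have hdiff : μ.real (A \ B) = μ.real A - μ.real B := measureReal_sdiff hBA hB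
  rcases le_total (μ.real B) (μ.real (A \ B)) with hle | hle
  · exact ⟨B, hBA, hB, hB_pos, by linarith⟩
  · exact ⟨A \ B, sdiff_subset, hA.diff hB, by linarith, by linarith⟩

lemma exists_measureReal_lt [NeZero μ] (h : Atomless μ) {ε : ℝ} (hε : 0 < ε) :
    ∃ A, MeasurableSet A ∧ 0 < μ.real A ∧ μ.real A < ε := by
  have halving (n : ℕ) :
      ∃ A, MeasurableSet A ∧ 0 < μ.real A ∧ μ.real A ≤ μ.real univ * (1 / 2) ^ n := by
    induction n with
    | zero => exact ⟨univ, .univ, measureReal_univ_pos, by simp⟩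
    | succ n ih =>
      obtain ⟨A, hA, hA_pos, hA_le⟩ := ih
      obtain ⟨B, -, hB, hB_pos, hB_le⟩ := h.exists_subset_measureReal_le_half hA hA_pos
      exact ⟨B, hB, hB_pos, by rw [pow_succ]; linarith⟩
  obtain ⟨n, hn⟩ := exists_pow_lt_of_lt_one (div_pos hε (measureReal_univ_pos (μ := μ)))
    (one_half_lt_one (α := ℝ))
  obtain ⟨A, hA, hA_pos, hA_le⟩ := halving n
  exact ⟨A, hA, hA_pos, hA_le.trans_lt ((lt_div_iff₀' measureReal_univ_pos).1 hn)⟩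

end Atomless

lemma essSup_indicator_const {μ : Measure Ω} {A : Set Ω} {t : ℝ} (hA : μ A ≠ 0) (ht : 0 ≤ t) :
    essSup (fun ω => ((A.indicator (fun _ => t) ω : ℝ) : EReal)) μ = t := by
  refine le_antisymm (essSup_le_of_ae_le _ (ae_of_all _ fun ω => ?_)) ?_
  · exact EReal.coe_le_coe_iff.2 (indicator_apply_le' (fun _ => le_rfl) fun _ => ht)
  · by_contra! hlt
    refine hA (measure_mono_null (fun ω hω => ?_) (ae_iff.1 (ae_lt_of_essSup_lt hlt)))
    simp [hω]

section ProbabilityMeasure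

variable {μ : Measure Ω} [IsProbabilityMeasure μ] {A : Set Ω} {p q t : ℝ}

lemma exists_ofReal_le_measure_setOf_le (Z : Ω → ℝ) (hp : p < 1) :
    ∃ x : ℝ, ENNReal.ofReal p ≤ μ {ω | Z ω ≤ x} := by
  have hmono : Monotone fun x : ℝ => {ω | Z ω ≤ x} := fun x y hxy ω hω => le_trans hω hxy
  have hunion : ⋃ x : ℝ, {ω | Z ω ≤ x} = univ := iUnion_eq_univ_iff.2 fun ω => ⟨Z ω, le_refl (Z ω)⟩
  have htendsto := tendsto_measure_iUnion_atTop (μ := μ) hmono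
  rw [hunion, measure_univ] at htendsto
  exact (htendsto.eventually_const_le (ENNReal.ofReal_lt_one.2 hp)).exists

lemma VaR_lt_top (Z : Ω → ℝ) (hp : p < 1) : VaR μ Z p < ⊤ := by
  unfold VaR
  split_ifs
  · obtain ⟨ω, hω⟩ := (ae_essInf_le (μ := μ) (f := fun ω => (Z ω : EReal))).exists
    exact hω.trans_lt (EReal.coe_lt_top _)
  · obtain ⟨x, hx⟩ := exists_ofReal_le_measure_setOf_le (μ := μ) Z hp
    exact sInf_lt_iff.2 ⟨x, mem_image_of_mem _ hx, EReal.coe_lt_top x⟩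

lemma ofReal_le_measure_indicator_const_le_iff (hA : MeasurableSet A) (ht : 0 ≤ t)
    (hp : p ∈ Ioo (0 : ℝ) 1) (x : ℝ) :
    ENNReal.ofReal p ≤ μ {ω | A.indicator (fun _ => t) ω ≤ x} ↔
      (Ioi (1 - μ.real A)).indicator (fun _ => t) p ≤ x := by
  have hcompl : μ.real Aᶜ = 1 - μ.real A := probReal_compl_eq_one_sub hA
  rw [ENNReal.ofReal_le_iff_le_toReal (measure_ne_top _ _), ← measureReal_def]
  rcases lt_or_ge x 0 with hx | hx
  · have hempty : {ω | A.indicator (fun _ => t) ω ≤ x} = ∅ :=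
      eq_empty_of_forall_notMem fun ω hω =>
        (hx.trans_le (indicator_nonneg (fun _ _ => ht) ω)).not_ge hω
    have hnonneg : 0 ≤ (Ioi (1 - μ.real A)).indicator (fun _ => t) p :=
      indicator_nonneg (fun _ _ => ht) p
    simp only [hempty, measureReal_empty, hp.1.not_ge, (hx.trans_le hnonneg).not_ge]
  rcases lt_or_ge x t with hxt | hxt
  · have hAc : {ω | A.indicator (fun _ => t) ω ≤ x} = Aᶜ := by
      ext ω; by_cases hω : ω ∈ A <;> simp [hω, hx, hxt]
    rw [hAc, hcompl, ← not_lt, indicator_apply]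
    split_ifs with hmem
    · simp only [mem_Ioi.1 hmem, hxt.not_ge, not_true_eq_false]
    · simp only [mem_Ioi] at hmem
      simp only [hmem, hx, not_false_eq_true]
  · have huniv : {ω | A.indicator (fun _ => t) ω ≤ x} = univ :=
      eq_univ_of_forall fun ω => indicator_apply_le' (fun _ => hxt) (fun _ => hx)
    simp only [huniv, probReal_univ, hp.2.le, true_iff]
    exact indicator_apply_le' (fun _ => hxt) (fun _ => hx)

lemma VaRr_indicator_const (hA : MeasurableSet A) (ht : 0 ≤ t) (hp : p ∈ Ioo (0 : ℝ) 1) :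
    VaRr μ (A.indicator fun _ => t) p = (Ioi (1 - μ.real A)).indicator (fun _ => t) p := by
  simp only [VaRr, ofReal_le_measure_indicator_const_le_iff hA ht hp]
  exact csInf_Ici

lemma setIntegral_VaRr_indicator_const (hA : MeasurableSet A) (ht : 0 ≤ t)
    (hp : p ∈ Icc (0 : ℝ) 1) :
    ∫ s in Ioo p 1, VaRr μ (A.indicator fun _ => t) s = t * min (μ.real A) (1 - p) := by
  have hmax : max p (1 - μ.real A) ≤ 1 := max_le hp.2 (sub_le_self _ measureReal_nonneg)
  calc ∫ s in Ioo p 1, VaRr μ (A.indicator fun _ => t) s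
      = ∫ s in Ioo p 1, (Ioi (1 - μ.real A)).indicator (fun _ => t) s :=
        setIntegral_congr_fun measurableSet_Ioo fun s hs =>
          VaRr_indicator_const hA ht ⟨hp.1.trans_lt hs.1, hs.2⟩
    _ = ∫ _ in Ioo (max p (1 - μ.real A)) 1, t := by
        rw [setIntegral_indicator measurableSet_Ioi, Ioo_inter_Ioi]
    _ = t * (1 - max p (1 - μ.real A)) := by
        rw [setIntegral_const, Real.volume_real_Ioo_of_le hmax, smul_eq_mul, mul_comm]
    _ = t * min (μ.real A) (1 - p) := by
        rw [← min_sub_sub_left, sub_sub_cancel, min_comm]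

-- The maximum in the denominator keeps the formula valid at `p = 1`, avoiding `_ / 0 = 0`.
lemma ES_indicator_const (hA : MeasurableSet A) (hA_pos : 0 < μ.real A) (ht : 0 ≤ t)
    (hp : p ∈ Icc (0 : ℝ) 1) :
    ES μ (A.indicator fun _ => t) p = (t * (μ.real A / max (μ.real A) (1 - p)) : ℝ) := by
  unfold ES
  split_ifs with h_one
  · have hA_ne : μ A ≠ 0 := (ENNReal.toReal_pos_iff.1 hA_pos).1.ne'
    rw [essSup_indicator_const hA_ne ht, h_one, sub_self, max_eq_left hA_pos.le,
      div_self hA_pos.ne', mul_one]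
  · have hp_lt : 0 < 1 - p := sub_pos.2 (lt_of_le_of_ne hp.2 h_one)
    have hmin_max := min_mul_max (μ.real A) (1 - p)
    rw [setIntegral_VaRr_indicator_const hA ht hp, EReal.coe_eq_coe_iff]
    field_simp
    linear_combination t * hmin_max

theorem stmt16_general {g : ℝ → EReal} (hA : MeasurableSet A) (hA_pos : 0 < μ.real A)
    (hA_lt : μ.real A < 1 - q) (hq : 0 ≤ q) (hp : p ∈ Ioc q 1) (hg : g p ≠ ⊤) :
    ¬ ∀ X : Ω → ℝ, Integrable X μ → ES μ X q = adjES μ g X := by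
  intro h
  have hp_mem : p ∈ Icc (0 : ℝ) 1 := ⟨hq.trans hp.1.le, hp.2⟩
  have hq_mem : q ∈ Icc (0 : ℝ) 1 := ⟨hq, hp.1.le.trans hp.2⟩
  have hslope : μ.real A / max (μ.real A) (1 - q) < μ.real A / max (μ.real A) (1 - p) :=
    div_lt_div_of_pos_left hA_pos (lt_max_of_lt_left hA_pos)
      (lt_max_of_lt_right (max_lt hA_lt (sub_lt_sub_left hp.1 1)))
  obtain ⟨n, hn⟩ := exists_lt_nsmul (sub_pos.2 hslope) (g p).toReal
  have hle : ES μ (A.indicator fun _ => (n : ℝ)) p - (g p).toReal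
      ≤ ES μ (A.indicator fun _ => (n : ℝ)) q := by
    rw [h _ ((integrable_const _).indicator hA)]
    exact (EReal.sub_le_sub le_rfl (EReal.le_coe_toReal hg)).trans
      (le_iSup₂ (f := fun p _ => ES μ _ p - g p) p hp_mem)
  rw [ES_indicator_const hA hA_pos n.cast_nonneg hp_mem,
    ES_indicator_const hA hA_pos n.cast_nonneg hq_mem, ← EReal.coe_sub,
    EReal.coe_le_coe_iff] at hle
  rw [nsmul_eq_mul, mul_sub] at hn
  linarith

end ProbabilityMeasure

/-- For `q ∈ (0,1)`, the standard Expected Shortfall `ES_q` is not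
a quantile-adjusted Expected Shortfall: there is no random variable `Z` bounded from
below with `ES_q(X) = sup_{p ∈ [0,1]} (ES_p(X) - VaR_p(Z))` for every `X ∈ L¹`. -/
theorem stmt16 (μ : Measure Ω) [IsProbabilityMeasure μ] (hatomless : Atomless μ)
    (q : ℝ) (hq : q ∈ Set.Ioo (0:ℝ) 1) :
    ¬ ∃ Z : Ω → ℝ, Measurable Z ∧ (∃ c : ℝ, ∀ ω, c ≤ Z ω) ∧
        ∀ X : Ω → ℝ, Integrable X μ →
          ES μ X q = ⨆ p ∈ Set.Icc (0:ℝ) 1, (ES μ X p - VaR μ Z p) := by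
  rintro ⟨Z, -, -, h⟩
  obtain ⟨A, hA, hA_pos, hA_lt⟩ := hatomless.exists_measureReal_lt (sub_pos.2 hq.2)
  obtain ⟨p, hqp, hp⟩ := exists_between hq.2
  exact stmt16_general hA hA_pos hA_lt hq.1.le ⟨hqp, hp.le⟩ (VaR_lt_top Z hp).ne h
end
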